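/- arXiv:1605.00632 — 10 statements merged into one kernel-verified Lean document; each statement's English description precedes it below -/
import Mathlib

section
/- Let n ≥ 1, m ≥ 1 and k ≥ 1. Let A : ℝ^m → Matrix (Fin n) (Fin n) ℝ be a matrix-valued map each of whose entries η ↦ (A η) i j is of class C^k, and let η̄ ∈ ℝ^m be a parameter at which A(η̄) has n distinct real eigenvalues, i.e. the characteristic polynomial of A(η̄) equals ∏_{i : Fin n} (X − C (μ i)) for some strictly monotone μ : Fin n → ℝ. Then there exist an open neighbourhood N of η̄ and, for each i : Fin n, functions λ_i : ℝ^m → ℝ, r_i : ℝ^m → (Fin n → ℝ) and l_i : ℝ^m → (Fin n → ℝ), all of class C^k on N, such that for every η ∈ N: (1) λ_i(η) < λ_j(η) whenever i < j; (2) r_i(η) ≠ 0 and (A η).mulVec (r_i η) = λ_i(η) • r_i(η) for every i; (3) l_i(η) ≠ 0 and (A η)ᵀ.mulVec (l_i η) = λ_i(η) • l_i(η) for every i. -/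
/-!
Each eigenvalue of `A η₀` is a simple root of the characteristic polynomial, so the implicit
function theorem continues it to a `C^k` root `λ_i(η)` (`exists_smooth_root`). Near `η₀` these roots
stay ordered, hence distinct, so they exhaust the characteristic polynomial
(`charpoly_eq_prod_of_injective`). The vector `∏_{j ≠ i} (A η - λ_j(η)) v_i`, with `v_i` an
eigenvector of `A η₀`, is then a `C^k` eigenvector by Cayley–Hamilton
(`exists_smooth_eigenvector`). Left eigenvectors are obtained from the transpose, which has the
same characteristic polynomial. As `k` is finite, being `C^k` at `η₀` gives `C^k` on a
neighbourhood.
-/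

open Polynomial Topology Filter in
/-- A simple root of the characteristic polynomial continues to a `C^k` root: the implicit function
theorem applied to `(η, x) ↦ det (x I - A η)`, whose partial derivative in `x` at a simple root is
nonzero. -/
lemma exists_smooth_root {n m k : ℕ} (hk : 1 ≤ k)
    {A : (Fin m → ℝ) → Matrix (Fin n) (Fin n) ℝ}
    (hA : ∀ i j : Fin n, ContDiff ℝ (k : ℕ∞) fun η => A η i j)
    {η₀ : Fin m → ℝ} {c : ℝ} (hroot : (A η₀).charpoly.eval c = 0)
    (hsimple : (A η₀).charpoly.derivative.eval c ≠ 0) :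
    ∃ lam : (Fin m → ℝ) → ℝ, ContDiffAt ℝ (k : ℕ∞) lam η₀ ∧ lam η₀ = c ∧
      ∀ᶠ η in 𝓝 η₀, (A η).charpoly.eval (lam η) = 0 := by
  have hk0 : ((k : ℕ∞) : WithTop ℕ∞) ≠ 0 := by
    simpa using (by omega : k ≠ 0)
  let F : (Fin m → ℝ) × ℝ → ℝ := fun p => (A p.1).charpoly.eval p.2
  have hF : ContDiff ℝ (k : ℕ∞) F := by
    have hdet : F = fun p => ∑ σ : Equiv.Perm (Fin n), (Equiv.Perm.sign σ : ℤ) *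
        ∏ i, ((if σ i = i then p.2 else 0) - A p.1 (σ i) i) := by
      funext p
      simp [F, Matrix.eval_charpoly, Matrix.det_apply', Matrix.scalar_apply,
        Matrix.diagonal_apply]
    rw [hdet]
    refine ContDiff.sum fun σ _ => contDiff_const.mul (contDiff_prod fun i _ => ?_)
    refine ContDiff.sub ?_ ((hA _ _).comp contDiff_fst)
    split_ifs
    · exact contDiff_snd
    · exact contDiff_const
  have hFat : ContDiffAt ℝ (k : ℕ∞) F (η₀, c) := hF.contDiffAt
  have hval : fderiv ℝ F (η₀, c) (0, 1) = (A η₀).charpoly.derivative.eval c := by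
    have h1 : HasFDerivAt F (fderiv ℝ F (η₀, c)) (η₀, c) :=
      (hFat.differentiableAt hk0).hasFDerivAt
    have h2 : HasDerivAt (fun x : ℝ => ((η₀, x) : (Fin m → ℝ) × ℝ)) (0, 1) c :=
      (hasDerivAt_const c η₀).prodMk (hasDerivAt_id c)
    exact (h1.comp_hasDerivAt c h2).unique ((A η₀).charpoly.hasDerivAt c)
  have hinv : (fderiv ℝ F (η₀, c) ∘L .inr ℝ (Fin m → ℝ) ℝ).IsInvertible := by
    refine ⟨ContinuousLinearEquiv.unitsEquivAut ℝ (Units.mk0 _ hsimple), ?_⟩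
    ext
    simp [hval]
  refine ⟨hFat.implicitFunction hk0 hinv, hFat.contDiffAt_implicitFunction hk0 hinv,
    hFat.implicitFunction_apply_self hk0 hinv, ?_⟩
  filter_upwards [hFat.eventually_apply_implicitFunction hk0 hinv] with η hη
  exact hη.trans hroot

open Polynomial in
lemma charpoly_eq_prod_of_injective {n : ℕ} {M : Matrix (Fin n) (Fin n) ℝ} {c : Fin n → ℝ}
    (hc : Function.Injective c) (hroot : ∀ i, M.charpoly.eval (c i) = 0) :
    M.charpoly = ∏ i, (X - C (c i)) := by
  refine (eq_of_monic_of_dvd_of_natDegree_le (monic_prod_X_sub_C _ _) M.charpoly_monic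
    (Fintype.prod_dvd_of_coprime (pairwise_coprime_X_sub_C hc)
      fun i => dvd_iff_isRoot.2 (hroot i)) ?_)
  simp

open Polynomial Topology Filter in
/-- Applying `∏_{j ≠ i} (A η - λ_j(η))` to a fixed eigenvector `v` of `A η₀` gives a vector that is
annihilated by `A η - λ_i(η)` (Cayley–Hamilton) and that equals `∏_{j ≠ i} (μ_i - μ_j) • v ≠ 0`
at `η₀`. -/
lemma exists_smooth_eigenvector {n m k : ℕ}
    {A : (Fin m → ℝ) → Matrix (Fin n) (Fin n) ℝ}
    (hA : ∀ i j : Fin n, ContDiff ℝ (k : ℕ∞) fun η => A η i j)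
    {η₀ : Fin m → ℝ} {lam : Fin n → (Fin m → ℝ) → ℝ}
    (hlam : ∀ i, ContDiffAt ℝ (k : ℕ∞) (lam i) η₀)
    (hinj : Function.Injective fun i => lam i η₀)
    (hchar : ∀ᶠ η in 𝓝 η₀, (A η).charpoly = ∏ i, (X - C (lam i η))) (i : Fin n) :
    ∃ r : (Fin m → ℝ) → (Fin n → ℝ), ContDiffAt ℝ (k : ℕ∞) r η₀ ∧
      ∀ᶠ η in 𝓝 η₀, r η ≠ 0 ∧ (A η).mulVec (r η) = lam i η • r η := by
  have hroot : (A η₀).charpoly.eval (lam i η₀) = 0 := by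
    rw [hchar.self_of_nhds, eval_prod]
    exact Finset.prod_eq_zero (Finset.mem_univ i) (by simp)
  obtain ⟨v, hv0, hv⟩ : ∃ v ≠ 0, (A η₀).mulVec v = lam i η₀ • v := by
    rw [Matrix.eval_charpoly] at hroot
    obtain ⟨v, hv0, hv⟩ := Matrix.exists_mulVec_eq_zero_iff.2 hroot
    refine ⟨v, hv0, ?_⟩
    rw [Matrix.sub_mulVec, sub_eq_zero] at hv
    rw [← hv]
    ext j
    simp [Matrix.scalar_apply, Matrix.mulVec_diagonal]
  let R : Finset (Fin n) → (Fin m → ℝ) → (Fin n → ℝ) := fun s η =>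
    (aeval (A η) (∏ j ∈ s, (X - C (lam j η)))).mulVec v
  have hR : ∀ s a η, a ∉ s → R (insert a s) η = (A η).mulVec (R s η) - lam a η • R s η := by
    intro s a η ha
    simp only [R, Finset.prod_insert ha, map_mul, map_sub, aeval_X, aeval_C,
      ← Matrix.mulVec_mulVec, Matrix.sub_mulVec]
    rw [Algebra.algebraMap_eq_smul_one, Matrix.smul_mulVec, Matrix.one_mulVec]
  have hsmooth : ∀ s, ContDiffAt ℝ (k : ℕ∞) (R s) η₀ := by
    intro s
    induction s using Finset.induction_on with
    | empty => simpa [R] using contDiffAt_const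
    | insert a s ha ih =>
      rw [show R (insert a s) = _ from funext fun η => hR s a η ha]
      have ih' := contDiffAt_pi.1 ih
      refine ContDiffAt.sub (contDiffAt_pi.2 fun b => ?_) ((hlam a).smul ih)
      simp only [Matrix.mulVec, dotProduct]
      exact ContDiffAt.sum fun j _ => (hA b j).contDiffAt.mul (ih' j)
  have hbase : ∀ s, R s η₀ = (∏ j ∈ s, (lam i η₀ - lam j η₀)) • v := by
    intro s
    induction s using Finset.induction_on with
    | empty => simp [R]
    | insert a s ha ih =>
      rw [hR s a η₀ ha, ih, Finset.prod_insert ha, Matrix.mulVec_smul, hv]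
      module
  refine ⟨R (Finset.univ.erase i), hsmooth _, ?_⟩
  have hne : R (Finset.univ.erase i) η₀ ≠ 0 := by
    rw [hbase]
    refine smul_ne_zero (Finset.prod_ne_zero_iff.2 fun j hj => sub_ne_zero.2 fun h => ?_) hv0
    exact Finset.ne_of_mem_erase hj (hinj h).symm
  filter_upwards [hchar, (hsmooth _).continuousAt.eventually_ne hne] with η hη hη0
  refine ⟨hη0, sub_eq_zero.1 ?_⟩
  rw [← hR _ i η (Finset.notMem_erase i _), Finset.insert_erase (Finset.mem_univ i)]
  simp only [R]
  rw [← hη, Matrix.aeval_self_charpoly, Matrix.zero_mulVec]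


/-- For a matrix depending `C^k`-smoothly on a parameter and having `n` distinct real
eigenvalues at a parameter value `η₀`, there is a neighbourhood of `η₀` on which the
eigenvalues and corresponding right and left eigenvectors can be chosen `C^k`-smoothly. -/
theorem spectral_smoothness
    (n m k : ℕ) (hn : 1 ≤ n) (hm : 1 ≤ m) (hk : 1 ≤ k)
    (A : (Fin m → ℝ) → Matrix (Fin n) (Fin n) ℝ)
    (hA : ∀ i j : Fin n, ContDiff ℝ (k : ℕ∞) fun η => A η i j)
    (η₀ : Fin m → ℝ) (μ : Fin n → ℝ) (hμ : StrictMono μ)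
    (hchar : (A η₀).charpoly = ∏ i : Fin n, (Polynomial.X - Polynomial.C (μ i))) :
    ∃ N : Set (Fin m → ℝ), IsOpen N ∧ η₀ ∈ N ∧
      ∃ (lam : Fin n → (Fin m → ℝ) → ℝ)
        (r : Fin n → (Fin m → ℝ) → (Fin n → ℝ))
        (l : Fin n → (Fin m → ℝ) → (Fin n → ℝ)),
        (∀ i : Fin n, ContDiffOn ℝ (k : ℕ∞) (lam i) N) ∧
        (∀ i : Fin n, ContDiffOn ℝ (k : ℕ∞) (r i) N) ∧
        (∀ i : Fin n, ContDiffOn ℝ (k : ℕ∞) (l i) N) ∧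
        ∀ η ∈ N,
          (∀ i j : Fin n, i < j → lam i η < lam j η) ∧
          (∀ i : Fin n, r i η ≠ 0 ∧ (A η).mulVec (r i η) = lam i η • r i η) ∧
          (∀ i : Fin n, l i η ≠ 0 ∧ (A η).transpose.mulVec (l i η) = lam i η • l i η) := by
  have hroot : ∀ i, (A η₀).charpoly.eval (μ i) = 0 := fun i => by
    rw [hchar, Polynomial.eval_prod]
    exact Finset.prod_eq_zero (Finset.mem_univ i) (by simp)
  have hsimple : ∀ i, (A η₀).charpoly.derivative.eval (μ i) ≠ 0 := fun i => by
    have hsep : (A η₀).charpoly.Separable := by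
      rw [hchar]
      exact Polynomial.separable_prod_X_sub_C_iff.2 hμ.injective
    simpa using hsep.aeval_derivative_ne_zero (x := μ i) (by simpa using hroot i)
  choose lam hlam hlam0 hlamroot using fun i => exists_smooth_root hk hA (hroot i) (hsimple i)
  have hord : ∀ᶠ η in nhds η₀, ∀ i j : Fin n, i < j → lam i η < lam j η := by
    refine Filter.eventually_all.2 fun i => Filter.eventually_all.2 fun j => ?_
    by_cases hij : i < j
    · have h0 : lam i η₀ < lam j η₀ := by simpa only [hlam0] using hμ hij
      filter_upwards [(hlam i).continuousAt.eventually_lt (hlam j).continuousAt h0] with η h _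
      exact h
    · exact Filter.Eventually.of_forall fun η h => absurd h hij
  have hcharA : ∀ᶠ η in nhds η₀,
      (A η).charpoly = ∏ i, (Polynomial.X - Polynomial.C (lam i η)) := by
    filter_upwards [hord, Filter.eventually_all.2 hlamroot] with η h1 h2
    exact charpoly_eq_prod_of_injective
      (StrictMono.injective (f := fun i => lam i η) fun i j => h1 i j) h2
  have hinj : Function.Injective fun i => lam i η₀ := by simpa only [hlam0] using hμ.injective
  choose r hr hreig using exists_smooth_eigenvector hA hlam hinj hcharA
  choose l hl hleig using exists_smooth_eigenvector (A := fun η => (A η).transpose)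
    (fun i j => hA j i) hlam hinj (by simpa only [Matrix.charpoly_transpose] using hcharA)
  have hkfin : ((k : ℕ∞) : WithTop ℕ∞) ≠ ((⊤ : ℕ∞) : WithTop ℕ∞) := by
    simp
  have hall : ∀ᶠ η in nhds η₀,
      (∀ i, ContDiffAt ℝ (k : ℕ∞) (lam i) η) ∧ (∀ i, ContDiffAt ℝ (k : ℕ∞) (r i) η) ∧
      (∀ i, ContDiffAt ℝ (k : ℕ∞) (l i) η) ∧
      (∀ i j : Fin n, i < j → lam i η < lam j η) ∧
      (∀ i, r i η ≠ 0 ∧ (A η).mulVec (r i η) = lam i η • r i η) ∧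
      (∀ i, l i η ≠ 0 ∧ (A η).transpose.mulVec (l i η) = lam i η • l i η) :=
    (Filter.eventually_all.2 fun i => (hlam i).eventually hkfin).and <|
    (Filter.eventually_all.2 fun i => (hr i).eventually hkfin).and <|
    (Filter.eventually_all.2 fun i => (hl i).eventually hkfin).and <|
    hord.and <| (Filter.eventually_all.2 hreig).and (Filter.eventually_all.2 hleig)
  obtain ⟨N, hN, hNo, hηN⟩ := eventually_nhds_iff.1 hall
  exact ⟨N, hNo, hηN, lam, r, l,
    fun i η hη => ((hN η hη).1 i).contDiffWithinAt,
    fun i η hη => ((hN η hη).2.1 i).contDiffWithinAt,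
    fun i η hη => ((hN η hη).2.2.1 i).contDiffWithinAt,
    fun η hη => (hN η hη).2.2.2⟩
end

section
/- Let p : ℝ → ℝ be continuously differentiable and let ρ, v : ℝ² → ℝ be continuously differentiable functions of (t,x) with ρ(t,x) > 0 for every (t,x). Assume the continuity equation ∂t ρ + ∂x(ρ·v) = 0 holds at every point of ℝ². Then the following two statements are equivalent: (a) ∂t(ρ·(v + p∘ρ)) + ∂x(ρ·v·(v + p∘ρ)) = 0 at every point; (b) ∂t v + (v − ρ·p'(ρ))·∂x v = 0 at every point. -/
/-!
Write `w = v + p(ρ)`. The product and chain rules give the pointwise identity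
`∂ₜ(ρ w) + ∂ₓ(ρ v w) = (w + ρ p'(ρ)) (∂ₜρ + ∂ₓ(ρ v)) + ρ (∂ₜv + (v - ρ p'(ρ)) ∂ₓv)`.
The continuity equation removes the first summand, and `ρ > 0` lets the factor `ρ` be
cancelled in the second.
-/

/-- For smooth positive solutions of the continuity equation, the conservation of the
generalized momentum `ρ (v + p(ρ))` of the Aw–Rascle–Zhang system is equivalent to the
transport equation `∂ₜ v + (v - ρ p'(ρ)) ∂ₓ v = 0`. -/
theorem ARZ_equivalent_forms
    (p : ℝ → ℝ) (hp : ContDiff ℝ 1 p)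
    (ρ v : ℝ × ℝ → ℝ) (hρ : ContDiff ℝ 1 ρ) (hv : ContDiff ℝ 1 v)
    (hρpos : ∀ z : ℝ × ℝ, 0 < ρ z)
    (hcont : ∀ z : ℝ × ℝ,
      fderiv ℝ ρ z (1, 0) + fderiv ℝ (fun y => ρ y * v y) z (0, 1) = 0) :
    (∀ z : ℝ × ℝ,
        fderiv ℝ (fun y => ρ y * (v y + p (ρ y))) z (1, 0) +
          fderiv ℝ (fun y => ρ y * v y * (v y + p (ρ y))) z (0, 1) = 0) ↔
      (∀ z : ℝ × ℝ,
        fderiv ℝ v z (1, 0) + (v z - ρ z * deriv p (ρ z)) * fderiv ℝ v z (0, 1) = 0) := by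
  refine forall_congr' fun z => ?_
  have hρ' := (hρ.differentiable one_ne_zero z).hasFDerivAt
  have hv' := (hv.differentiable one_ne_zero z).hasFDerivAt
  have hp' := (hp.differentiable one_ne_zero (ρ z)).hasDerivAt
  have hw := hv'.add (hp'.comp_hasFDerivAt z hρ')
  have hflux := hρ'.mul hv'
  have hc := hcont z
  have e1 : fderiv ℝ (fun y => ρ y * v y) z = _ := hflux.fderiv
  have e2 : fderiv ℝ (fun y => ρ y * (v y + p (ρ y))) z = _ := (hρ'.mul hw).fderiv
  have e3 : fderiv ℝ (fun y => ρ y * v y * (v y + p (ρ y))) z = _ := (hflux.mul hw).fderiv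
  rw [e1] at hc
  rw [e2, e3]
  simp only [add_apply, smul_apply, smul_eq_mul,
    Pi.add_apply, Pi.mul_apply, Function.comp_apply] at hc ⊢
  -- The momentum expression and `ρ` times the transport expression differ by
  -- `w + ρ p'(ρ)` times the continuity equation.
  constructor <;> intro h
  · apply mul_left_cancel₀ (hρpos z).ne'
    linear_combination h - (v z + p (ρ z) + ρ z * deriv p (ρ z)) * hc
  · linear_combination ρ z * h + (v z + p (ρ z) + ρ z * deriv p (ρ z)) * hc
end

section
/- Let Fα > 0, V ≥ 0, R > 0 and w ∈ ℝ. Define ψ(ρ) := ρ·(w − p(ρ)) and I := {ρ ∈ [0, R] : ψ(ρ) = Fα + V·ρ}. Suppose there exists ρm ∈ (0, R) with ψ(ρm) > Fα + V·ρm, and suppose ψ(R) ≤ Fα + V·R. Then I consists of exactly two points: there exist ρ̌ and ρ̂ with 0 < ρ̌ < ρm < ρ̂ ≤ R and I = {ρ̌, ρ̂}. -/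
/-!
The gap `g(ρ) = ρ p(ρ) + (F_α + V ρ - w ρ)` between the constraint line and the flux is strictly
convex, being the sum of a strictly convex function and an affine one. Since `g(0) = F_α > 0`,
`g(ρ_m) < 0` and `g(R) ≥ 0`, the intermediate value theorem gives one zero on each side of `ρ_m`.
A third zero is impossible: of three distinct zeros, the middle one would have a strictly negative
value by strict convexity (`StrictConvexOn.neg_of_zeros`).
-/

lemma StrictConvexOn.neg_of_zeros {s : Set ℝ} {g : ℝ → ℝ} (hg : StrictConvexOn ℝ s g)
    {a b c : ℝ} (ha : a ∈ s) (hc : c ∈ s) (hab : a < b) (hbc : b < c)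
    (ga : g a = 0) (gc : g c = 0) : g b < 0 := by
  have hb : b ∈ openSegment ℝ a c := by
    rw [openSegment_eq_Ioo (hab.trans hbc)]
    exact ⟨hab, hbc⟩
  simpa [ga, gc] using hg.lt_on_openSegment ha hc (hab.trans hbc).ne hb


/-- If the flux `ψ(ρ) = ρ (w - p(ρ))` along a Lax curve of the first family exceeds the
constraint line `F_α + V ρ` at some `ρ_m ∈ (0, R)` and lies below it at `ρ = R`, then the
set of intersection points in `[0, R]` consists of exactly two densities
`0 < ρ̌ < ρ_m < ρ̂ ≤ R`. -/
theorem constraint_intersections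
    (p : ℝ → ℝ) (hp : ContDiff ℝ 2 p) (hp0 : p 0 = 0)
    (hp' : ∀ ρ : ℝ, 0 < ρ → 0 < deriv p ρ)
    (hconv : StrictConvexOn ℝ (Set.Ici 0) fun ρ => ρ * p ρ)
    (Fα V R w : ℝ) (hF : 0 < Fα) (hV : 0 ≤ V) (hR : 0 < R)
    (ρm : ℝ) (hρm : ρm ∈ Set.Ioo 0 R)
    (hmid : Fα + V * ρm < ρm * (w - p ρm))
    (hend : R * (w - p R) ≤ Fα + V * R) :
    ∃ ρlo ρhi : ℝ, 0 < ρlo ∧ ρlo < ρm ∧ ρm < ρhi ∧ ρhi ≤ R ∧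
      {ρ ∈ Set.Icc 0 R | ρ * (w - p ρ) = Fα + V * ρ} = {ρlo, ρhi} := by
  obtain ⟨hm0, hmR⟩ := hρm
  set g : ℝ → ℝ := fun ρ => ρ * p ρ + (Fα + V * ρ - w * ρ) with hg
  have hgc : StrictConvexOn ℝ (Set.Ici 0) g := by
    refine hconv.add_convexOn ⟨convex_Ici 0, fun x _ y _ a b _ _ hab => le_of_eq ?_⟩
    simp only [smul_eq_mul]
    linear_combination (-Fα) * hab
  have hcont : Continuous g := by
    have := hp.continuous
    fun_prop
  have hiff : ∀ ρ, ρ * (w - p ρ) = Fα + V * ρ ↔ g ρ = 0 := fun ρ =>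
    ⟨fun h => by simp only [hg]; linarith, fun h => by simp only [hg] at h; linarith⟩
  have g0 : 0 < g 0 := by simpa [hg] using hF
  have gm : g ρm < 0 := by simp only [hg]; linarith
  have gR : 0 ≤ g R := by simp only [hg]; linarith
  obtain ⟨a, ⟨ha0, ham⟩, ga⟩ := intermediate_value_Ioo' hm0.le hcont.continuousOn ⟨gm, g0⟩
  obtain ⟨b, ⟨hmb, hbR⟩, gb⟩ := intermediate_value_Ioc hmR.le hcont.continuousOn ⟨gm, gR⟩
  refine ⟨a, b, ha0, ham, hmb, hbR, ?_⟩
  ext x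
  simp only [Set.mem_setOf_eq, Set.mem_insert_iff, Set.mem_singleton_iff, hiff]
  have hb0 : 0 < b := hm0.trans hmb
  have hab : a < b := ham.trans hmb
  constructor
  · rintro ⟨⟨hx0, _⟩, gx⟩
    by_contra! hne
    rcases lt_or_gt_of_ne hne.1 with hxa | hax
    · exact (hgc.neg_of_zeros hx0 hb0.le hxa hab gx gb).ne ga
    rcases lt_or_gt_of_ne hne.2 with hxb | hbx
    · exact (hgc.neg_of_zeros ha0.le hb0.le hax hxb ga gb).ne gx
    · exact (hgc.neg_of_zeros ha0.le hx0 hab hbx ga gx).ne gb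
  · rintro (rfl | rfl)
    · exact ⟨⟨ha0.le, (ham.trans hmR).le⟩, ga⟩
    · exact ⟨⟨hb0.le, hbR⟩, gb⟩
end

section
/- Let Fα > 0 and V ≥ 0, and suppose that for every v ∈ [v1, v2] with v > V one has v + p(Fα/(v − V)) ≥ w2. Then every (ρ, v) ∈ D satisfies ρ·(v − V) ≤ Fα. (This is the key estimate showing that under this hypothesis the flux constraint of the moving bottleneck is never active on D, so the two constrained Riemann solvers coincide with the classical Riemann solver.) -/
/-! A positive pressure derivative makes `p` strictly increasing on `[0, ∞)`. If some state
`(ρ, v)` of the domain had `ρ (v - V) > F_α`, then `v > V` and `ρ > F_α / (v - V) > 0`, so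
`v + p ρ > v + p (F_α / (v - V)) ≥ w₂`, contradicting `v + p ρ ≤ w₂`. -/

/-- The invariant domain `D` of the Aw–Rascle–Zhang system determined by the bounds
`v₁ ≤ v ≤ v₂` and `w₁ ≤ v + p(ρ) ≤ w₂`. -/
def invDomain (p : ℝ → ℝ) (v1 v2 w1 w2 : ℝ) : Set (ℝ × ℝ) :=
  {rv | 0 ≤ rv.1 ∧ 0 ≤ rv.2 ∧ v1 ≤ rv.2 ∧ rv.2 ≤ v2 ∧
    w1 ≤ rv.2 + p rv.1 ∧ rv.2 + p rv.1 ≤ w2}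

/-- If `h_α(v) = v + p(F_α / (v - V)) ≥ w₂` for every `v ∈ [v₁, v₂]` with `v > V`, then
every state of the invariant domain `D` satisfies the bottleneck flux constraint
`ρ (v - V) ≤ F_α`; hence the constraint is never active on `D`. -/
theorem constraint_inactive_on_invariant_domain
    (p : ℝ → ℝ) (hp : ContDiff ℝ 2 p) (hp0 : p 0 = 0)
    (hp' : ∀ ρ : ℝ, 0 < ρ → 0 < deriv p ρ)
    (hconv : StrictConvexOn ℝ (Set.Ici 0) fun ρ => ρ * p ρ)
    (v1 v2 w1 w2 : ℝ) (hv1 : 0 < v1) (hv12 : v1 < v2)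
    (hw1 : 0 < w1) (hw12 : w1 < w2) (hv2w2 : v2 < w2)
    (Fα V : ℝ) (hF : 0 < Fα) (hV : 0 ≤ V)
    (hcond : ∀ v ∈ Set.Icc v1 v2, V < v → w2 ≤ v + p (Fα / (v - V))) :
    ∀ rv ∈ invDomain p v1 v2 w1 w2, rv.1 * (rv.2 - V) ≤ Fα := by
  rintro ⟨ρ, v⟩ ⟨hρ, -, hv1', hv2', -, hw⟩
  dsimp only at *
  have hmono : StrictMonoOn p (Set.Ici 0) := by
    refine strictMonoOn_of_deriv_pos (convex_Ici 0) hp.continuous.continuousOn fun x hx => ?_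
    rw [interior_Ici] at hx
    exact hp' x hx
  by_contra! hlt
  have hvV : 0 < v - V := pos_of_mul_pos_right (hF.trans hlt) hρ
  have hlt' : Fα / (v - V) < ρ := (div_lt_iff₀ hvV).2 hlt
  have hp_lt := hmono (Set.mem_Ici.2 (div_pos hF hvV).le) (Set.mem_Ici.2 hρ) hlt'
  linarith [hcond v ⟨hv1', hv2'⟩ (sub_pos.1 hvV)]
end

section
/- Assume additionally p''(ρ) ≥ 0 for every ρ ≥ 0 and λ1(ρmin, vmin) < 0. Fix (ρ0, v0) ∈ D. Then for every (ρ, v) ∈ D with v = L1(ρ; ρ0, v0), the function s ↦ s·L1(s; ρ0, v0) is differentiable at ρ and its derivative there satisfies λ1(ρmax, vmax) ≤ d/ds [s·L1(s; ρ0, v0)]|_{s=ρ} ≤ λ1(ρmin, vmin); in particular s ↦ s·L1(s; ρ0, v0) is bi-Lipschitz along the densities of points of D on the Lax curve through (ρ0, v0). -/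
theorem strictMonoOn_pressure {p : ℝ → ℝ} (hp : ContDiff ℝ 2 p)
    (hp' : ∀ ρ : ℝ, 0 < ρ → 0 < deriv p ρ) : StrictMonoOn p (Set.Ici 0) := by
  refine strictMonoOn_of_deriv_pos (convex_Ici 0) hp.continuous.continuousOn fun x hx => ?_
  rw [interior_Ici] at hx
  exact hp' x hx

theorem monotoneOn_mul_deriv {p : ℝ → ℝ} (hp : ContDiff ℝ 2 p)
    (hp' : ∀ ρ : ℝ, 0 < ρ → 0 < deriv p ρ)
    (hp'' : ∀ ρ : ℝ, 0 ≤ ρ → 0 ≤ deriv (deriv p) ρ) :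
    MonotoneOn (fun ρ => ρ * deriv p ρ) (Set.Ici 0) := by
  have hd : Differentiable ℝ (deriv p) :=
    (hp.iterate_deriv' 1 1).differentiable one_ne_zero
  have hmono : MonotoneOn (deriv p) (Set.Ici 0) := by
    refine monotoneOn_of_deriv_nonneg (convex_Ici 0) hd.continuous.continuousOn
      hd.differentiableOn fun x hx => hp'' x ?_
    rw [interior_Ici] at hx
    exact le_of_lt hx
  intro a ha b hb hab
  have ha0 : 0 ≤ a := ha
  -- The sign of `p'` is only given on `(0, ∞)`, so the endpoint `b = 0` is treated apart.
  rcases (ha0.trans hab).eq_or_lt with h | h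
  · obtain rfl : a = b := le_antisymm hab (h ▸ ha0)
    exact le_rfl
  · exact (mul_le_mul_of_nonneg_left (hmono ha hb hab) ha0).trans
      (mul_le_mul_of_nonneg_right hab (hp' b h).le)

/-- If moreover `p'' ≥ 0` and `λ₁(ρ_min, v_min) < 0`, then along the Lax curve of the
first family through any point `(ρ₀, v₀)` of the invariant domain, the flux
`s ↦ s L₁(s; ρ₀, v₀)` is differentiable at the density of any point of `D` on the curve,
with derivative between `λ₁(ρ_max, v_max)` and `λ₁(ρ_min, v_min)`
(hence the flux is bi-Lipschitz there). -/
theorem lax_curve_flux_biLipschitz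
    (p : ℝ → ℝ) (hp : ContDiff ℝ 2 p) (hp0 : p 0 = 0)
    (hp' : ∀ ρ : ℝ, 0 < ρ → 0 < deriv p ρ)
    (hconv : StrictConvexOn ℝ (Set.Ici 0) fun ρ => ρ * p ρ)
    (hp'' : ∀ ρ : ℝ, 0 ≤ ρ → 0 ≤ deriv (deriv p) ρ)
    (v1 v2 w1 w2 : ℝ) (hv1 : 0 < v1) (hv12 : v1 < v2)
    (hw1 : 0 < w1) (hw12 : w1 < w2) (hv2w2 : v2 < w2)
    (ρmin ρmax : ℝ) (hρmin0 : 0 ≤ ρmin) (hρmax0 : 0 ≤ ρmax)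
    (hpmin : p ρmin = w1 - v2) (hpmax : p ρmax = w2 - v1)
    (hlam_min : v2 - ρmin * deriv p ρmin < 0)
    (ρ0 v0 : ℝ) (h0 : (ρ0, v0) ∈ invDomain p v1 v2 w1 w2) :
    ∀ ρ v : ℝ, (ρ, v) ∈ invDomain p v1 v2 w1 w2 → v = v0 + p ρ0 - p ρ →
      DifferentiableAt ℝ (fun s => s * (v0 + p ρ0 - p s)) ρ ∧
      v1 - ρmax * deriv p ρmax ≤ deriv (fun s => s * (v0 + p ρ0 - p s)) ρ ∧
      deriv (fun s => s * (v0 + p ρ0 - p s)) ρ ≤ v2 - ρmin * deriv p ρmin := by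
  rintro ρ v ⟨hρ, -, hv1ρ, hvρ2, hw1ρ, hwρ2⟩ hv
  dsimp only at hρ hv1ρ hvρ2 hw1ρ hwρ2
  have hder : HasDerivAt (fun s => s * (v0 + p ρ0 - p s)) (v - ρ * deriv p ρ) ρ := by
    have hpρ : HasDerivAt p (deriv p ρ) ρ :=
      (hp.differentiable two_ne_zero ρ).hasDerivAt
    have h := (hasDerivAt_id' ρ).fun_mul (hpρ.const_sub (v0 + p ρ0))
    have hval : v - ρ * deriv p ρ = 1 * (v0 + p ρ0 - p ρ) + ρ * -deriv p ρ := by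
      rw [hv]
      ring
    rw [hval]
    exact h
  have hpm := strictMonoOn_pressure hp hp'
  have hgm := monotoneOn_mul_deriv hp hp' hp''
  have hlo : ρmin ≤ ρ := (hpm.le_iff_le hρmin0 hρ).1 (by linarith)
  have hhi : ρ ≤ ρmax := (hpm.le_iff_le hρ hρmax0).1 (by linarith)
  have hglo : ρmin * deriv p ρmin ≤ ρ * deriv p ρ := hgm hρmin0 hρ hlo
  have hghi : ρ * deriv p ρ ≤ ρmax * deriv p ρmax := hgm hρ hρmax0 hhi
  rw [hder.deriv]
  exact ⟨hder.differentiableAt, by linarith, by linarith⟩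
end

section
/- Let ρmin ≥ 0 satisfy p(ρmin) = w1 − v2 (so that the point (ρmin, v2) belongs to D). Then the following are equivalent: (a) for every (ρ0, v0) ∈ D and every (ρ, v) ∈ D with v + p(ρ) = v0 + p(ρ0), the derivative at ρ of the function s ↦ s·L1(s; ρ0, v0) is strictly negative; (b) λ1(ρmin, v2) < 0. -/
theorem deriv_flux (p : ℝ → ℝ) (hp : Differentiable ℝ p) {w ρ v : ℝ} (h : v + p ρ = w) :
    deriv (fun s => s * (w - p s)) ρ = v - ρ * deriv p ρ := by
  have hd := (hasDerivAt_id ρ).mul ((hp ρ).hasDerivAt.const_sub w)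
  refine hd.deriv.trans ?_
  simp only [id]
  linarith

/-- The fluxes `s ↦ s L₁(s; ρ₀, v₀)` along the Lax curves of the first family through
points of the invariant domain `D` have strictly negative derivative at the density of
every point of `D` on the corresponding curve, if and only if `λ₁(ρ_min, v₂) < 0`. -/
theorem decreasing_lax_curves_iff
    (p : ℝ → ℝ) (hp : ContDiff ℝ 2 p) (hp0 : p 0 = 0)
    (hp' : ∀ ρ : ℝ, 0 < ρ → 0 < deriv p ρ)
    (hp'' : ∀ ρ : ℝ, 0 ≤ ρ → 0 ≤ deriv (deriv p) ρ)
    (v1 v2 w1 w2 : ℝ) (hv1 : 0 < v1) (hv12 : v1 < v2)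
    (hw1 : 0 < w1) (hw12 : w1 < w2) (hv2w2 : v2 < w2)
    (ρmin : ℝ) (hρmin0 : 0 ≤ ρmin) (hpmin : p ρmin = w1 - v2) :
    (∀ ρ0 v0 : ℝ, (ρ0, v0) ∈ invDomain p v1 v2 w1 w2 →
        ∀ ρ v : ℝ, (ρ, v) ∈ invDomain p v1 v2 w1 w2 → v + p ρ = v0 + p ρ0 →
          deriv (fun s => s * (v0 + p ρ0 - p s)) ρ < 0) ↔
      v2 - ρmin * deriv p ρmin < 0 := by
  have hpd : Differentiable ℝ p := hp.differentiable (by norm_num)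
  have hpd' : Differentiable ℝ (deriv p) := by
    have h2 : ContDiff ℝ (1 + 1) p := by simpa [one_add_one_eq_two] using hp
    exact (contDiff_succ_iff_deriv.1 h2).2.2.differentiable (by norm_num)
  have hmono : StrictMonoOn p (Set.Ici 0) :=
    strictMonoOn_of_deriv_pos (convex_Ici 0) hpd.continuous.continuousOn fun x hx => by
      rw [interior_Ici] at hx
      exact hp' x hx
  have hmono' : MonotoneOn (deriv p) (Set.Ici 0) :=
    monotoneOn_of_deriv_nonneg (convex_Ici 0) hpd'.continuous.continuousOn
      hpd'.differentiableOn fun x hx => hp'' x (interior_subset hx)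
  constructor
  · intro h
    have hmem : (ρmin, v2) ∈ invDomain p v1 v2 w1 w2 := by
      refine ⟨hρmin0, ?_, ?_, ?_, ?_, ?_⟩ <;> dsimp only <;> linarith
    have hlt := h ρmin v2 hmem ρmin v2 hmem rfl
    rwa [deriv_flux p hpd rfl] at hlt
  · intro hb ρ0 v0 _ ρ v ⟨hρ, _, _, hv2, hw, _⟩ heq
    dsimp only at hρ hv2 hw
    rw [deriv_flux p hpd heq]
    have hle : ρmin ≤ ρ := (hmono.le_iff_le hρmin0 hρ).1 (by linarith)
    -- `ρmin = 0` would turn `hb` into `v2 < 0`, so `p'` is positive at `ρmin`.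
    have hpos : 0 < ρmin := by
      rcases hρmin0.eq_or_lt with h0 | h0
      · rw [← h0] at hb
        linarith
      · exact h0
    have hmul : ρmin * deriv p ρmin ≤ ρ * deriv p ρ :=
      mul_le_mul hle (hmono' hρmin0 hρ hle) (hp' ρmin hpos).le hρ
    linarith
end

section
/- Let q > 0 and w ∈ ℝ, and set ψ(ρ) := ρ·(w − p(ρ)). Let 0 < ρ̌ < ρ̂ satisfy ψ(ρ̌) = ψ(ρ̂) = q. Then for every ρδ > 0, setting vδ := w − p(ρδ) (so that ρδ·vδ = ψ(ρδ) and vδ + p(ρδ) = w): (i) ρδ·vδ ≤ q if and only if ρδ ≤ ρ̌ or ρδ ≥ ρ̂; (ii) if ρδ·vδ ≤ q, then ρδ ≤ ρ̌ if and only if λ1(ρδ, vδ) > 0, and ρδ ≥ ρ̂ if and only if λ1(ρδ, vδ) < 0. -/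
/-!
Along the Lax curve `ρ ↦ ψ(ρ) = ρ (w - p ρ)` the derivative of the flux is exactly the first
characteristic speed, `ψ'(ρ) = w - p ρ - ρ p'(ρ)`. It is strictly decreasing for `ρ > 0`, because
`p` is strictly increasing and `p'` is positive and nondecreasing. By Rolle's theorem it vanishes
at some `c` strictly between the two intersection densities, so `ψ` strictly increases on `(0, c]`
and strictly decreases on `[c, ∞)`. Comparing with `ψ = q` at the intersection density on the
same side of `c` gives (i); the sign of `ψ'` on each side of `c` gives (ii).
-/

/-- The derivative of the flux along a Lax curve of the first family is the first
characteristic speed. -/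
lemma hasDerivAt_laxFlux {p : ℝ → ℝ} (hp : Differentiable ℝ p) (w x : ℝ) :
    HasDerivAt (fun ρ => ρ * (w - p ρ)) ((w - p x) - x * deriv p x) x := by
  have h := (hasDerivAt_id x).mul ((hp x).hasDerivAt.const_sub w)
  refine h.congr_deriv ?_
  simp only [id]
  ring

/-- Strict concavity of the flux on positive densities, in terms of its derivative. -/
lemma strictAntiOn_charSpeed {p : ℝ → ℝ} (hp : ContDiff ℝ 2 p)
    (hp' : ∀ ρ : ℝ, 0 < ρ → 0 < deriv p ρ)
    (hp'' : ∀ ρ : ℝ, 0 ≤ ρ → 0 ≤ deriv (deriv p) ρ) (w : ℝ) :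
    StrictAntiOn (fun ρ => (w - p ρ) - ρ * deriv p ρ) (Set.Ioi 0) := by
  have hd : Differentiable ℝ (deriv p) :=
    (contDiff_succ_iff_deriv (n := 1).1 hp).2.2.differentiable one_ne_zero
  have hmono : StrictMonoOn p (Set.Ioi 0) :=
    strictMonoOn_of_deriv_pos (convex_Ioi 0) hp.continuous.continuousOn fun x hx =>
      hp' x (by simpa using hx)
  have hmono' : MonotoneOn (deriv p) (Set.Ioi 0) :=
    monotoneOn_of_deriv_nonneg (convex_Ioi 0) hd.continuous.continuousOn hd.differentiableOn
      fun x hx => hp'' x (le_of_lt (by simpa using hx))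
  intro a ha b hb hab
  have h1 := hmono ha hb hab
  have h2 : a * deriv p a ≤ b * deriv p b :=
    mul_le_mul hab.le (hmono' ha hb hab.le) (hp' a ha).le (le_of_lt hb)
  show (w - p b) - b * deriv p b < (w - p a) - a * deriv p a
  linarith


/-- Let `ρ̌ < ρ̂` be the two intersection densities of the flux `ψ(ρ) = ρ (w - p(ρ))`
along a Lax curve of the first family with the constraint level `q`. For any `ρ_δ > 0`
on the curve, with `v_δ = w - p(ρ_δ)`:
(i) the constraint `ρ_δ v_δ ≤ q` holds iff `ρ_δ ≤ ρ̌` or `ρ_δ ≥ ρ̂`;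
(ii) when it holds, `ρ_δ ≤ ρ̌` iff `λ₁(ρ_δ, v_δ) > 0` and `ρ_δ ≥ ρ̂` iff
`λ₁(ρ_δ, v_δ) < 0`. -/
theorem concave_functions_properties
    (p : ℝ → ℝ) (hp : ContDiff ℝ 2 p) (hp0 : p 0 = 0)
    (hp' : ∀ ρ : ℝ, 0 < ρ → 0 < deriv p ρ)
    (hp'' : ∀ ρ : ℝ, 0 ≤ ρ → 0 ≤ deriv (deriv p) ρ)
    (q w : ℝ) (hq : 0 < q)
    (ρlo ρhi : ℝ) (hρlo : 0 < ρlo) (hlt : ρlo < ρhi)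
    (hlo : ρlo * (w - p ρlo) = q) (hhi : ρhi * (w - p ρhi) = q) :
    ∀ ρδ : ℝ, 0 < ρδ →
      (ρδ * (w - p ρδ) ≤ q ↔ ρδ ≤ ρlo ∨ ρhi ≤ ρδ) ∧
      (ρδ * (w - p ρδ) ≤ q →
        ((ρδ ≤ ρlo ↔ 0 < (w - p ρδ) - ρδ * deriv p ρδ) ∧
         (ρhi ≤ ρδ ↔ (w - p ρδ) - ρδ * deriv p ρδ < 0))) := by
  have hder := hasDerivAt_laxFlux (hp.differentiable two_ne_zero) w
  have hanti := strictAntiOn_charSpeed hp hp' hp'' w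
  set ψ : ℝ → ℝ := fun ρ => ρ * (w - p ρ) with hψ
  have hcont : Continuous ψ := continuous_iff_continuousAt.2 fun x => (hder x).continuousAt
  obtain ⟨c, ⟨hc1, hc2⟩, hc⟩ := exists_hasDerivAt_eq_zero hlt hcont.continuousOn
    (hlo.trans hhi.symm : ψ ρlo = ψ ρhi) fun x _ => hder x
  have hc0 : 0 < c := hρlo.trans hc1
  have hpos : ∀ x, 0 < x → x < c → 0 < (w - p x) - x * deriv p x := fun x hx hxc => by
    simpa only [hc] using hanti hx hc0 hxc
  have hneg : ∀ x, c < x → (w - p x) - x * deriv p x < 0 := fun x hxc => by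
    simpa only [hc] using hanti hc0 (hc0.trans hxc) hxc
  have hinc : StrictMonoOn ψ (Set.Ioc 0 c) :=
    strictMonoOn_of_deriv_pos (convex_Ioc 0 c) hcont.continuousOn fun x hx => by
      rw [interior_Ioc] at hx
      rw [(hder x).deriv]
      exact hpos x hx.1 hx.2
  have hdec : StrictAntiOn ψ (Set.Ici c) :=
    strictAntiOn_of_deriv_neg (convex_Ici c) hcont.continuousOn fun x hx => by
      rw [interior_Ici] at hx
      rw [(hder x).deriv]
      exact hneg x hx
  intro ρδ hδ
  have hleft : ρδ ≤ c → (ρδ * (w - p ρδ) ≤ q ↔ ρδ ≤ ρlo) := fun h => by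
    rw [← hlo]
    exact hinc.le_iff_le ⟨hδ, h⟩ ⟨hρlo, hc1.le⟩
  have hright : c ≤ ρδ → (ρδ * (w - p ρδ) ≤ q ↔ ρhi ≤ ρδ) := fun h => by
    rw [← hhi]
    exact hdec.le_iff_ge h hc2.le
  have hi : ρδ * (w - p ρδ) ≤ q ↔ ρδ ≤ ρlo ∨ ρhi ≤ ρδ := by
    rcases le_total ρδ c with h | h
    · rw [hleft h, or_iff_left (h.trans_lt hc2).not_ge]
    · rw [hright h, or_iff_right (hc1.trans_le h).not_ge]
  refine ⟨hi, fun hle => ?_⟩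
  rcases hi.1 hle with h | h
  · have hs := hpos ρδ hδ (h.trans_lt hc1)
    exact ⟨iff_of_true h hs, iff_of_false (h.trans_lt hlt).not_ge hs.le.not_gt⟩
  · have hs := hneg ρδ (hc2.trans_le h)
    exact ⟨iff_of_false (hlt.trans_le h).not_ge hs.le.not_gt, iff_of_true h hs⟩
end

section
/- Let ρmin ≥ 0 with p(ρmin) = w1 − v2 satisfy λ1(ρmin, v2) < 0. Fix q > 0 and let (ρα, vα), (ρβ, vβ) ∈ D satisfy ρα·vα = ρβ·vβ = q. Then vα + p(ρα) ≤ vβ + p(ρβ) if and only if ρα ≤ ρβ. -/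
theorem le_density_of_mem_invDomain {p : ℝ → ℝ} (hp : Differentiable ℝ p)
    (hp' : ∀ ρ : ℝ, 0 < ρ → 0 < deriv p ρ) {v1 v2 w1 w2 ρmin ρ v : ℝ}
    (hpmin : p ρmin = w1 - v2) (h0 : 0 < ρmin)
    (h : (ρ, v) ∈ invDomain p v1 v2 w1 w2) : ρmin ≤ ρ := by
  obtain ⟨hρ, -, -, hv, hw, -⟩ := h
  simp only at hρ hv hw
  have hmono : StrictMonoOn p (Set.Ici 0) :=
    strictMonoOn_of_deriv_pos (convex_Ici 0) hp.continuous.continuousOn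
      fun x hx => hp' x (by simpa using hx)
  exact (hmono.le_iff_le (Set.mem_Ici.2 h0.le) (Set.mem_Ici.2 hρ)).1 (by linarith)

/-- The convexity of `p` enters as monotonicity of its derivative on `[0, ∞)`. Of the second point
only its density and its position on the level line matter, so no bound on `vb` is needed. -/
theorem riemann_invariant_lt_of_density_lt {p : ℝ → ℝ} (hp : Differentiable ℝ p)
    {v2 ρmin ρa va ρb vb : ℝ} (hmono : MonotoneOn (deriv p) (Set.Ici 0))
    (h0 : 0 < ρmin) (hlam : v2 - ρmin * deriv p ρmin < 0)
    (ha : ρmin ≤ ρa) (hva : 0 ≤ va) (hva2 : va ≤ v2)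
    (hab : ρa * va = ρb * vb) (hlt : ρa < ρb) :
    va + p ρa < vb + p ρb := by
  obtain ⟨c, hc, hceq⟩ := exists_deriv_eq_slope p hlt hp.continuous.continuousOn
    hp.differentiableOn
  have hd : 0 < ρb - ρa := sub_pos.2 hlt
  have hb : 0 < ρb := by linarith
  rw [eq_div_iff hd.ne'] at hceq
  have hle : deriv p ρmin ≤ deriv p c :=
    hmono (Set.mem_Ici.2 h0.le) (Set.mem_Ici.2 (by linarith [hc.1])) (by linarith [hc.1])
  have hpos : 0 < deriv p ρmin := by
    by_contra! hneg
    nlinarith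
  have hslope : va < ρb * deriv p c :=
    calc va < ρmin * deriv p ρmin := by linarith
      _ ≤ ρb * deriv p c := mul_le_mul (by linarith) hle hpos.le hb.le
  -- After multiplication by `ρb`, the relation `ρa va = ρb vb` gives
  -- `ρb (wb - wa) = (ρb - ρa) (ρb p'(c) - va)`.
  have key : 0 < ρb * ((vb + p ρb) - (va + p ρa)) := by
    have h1 := mul_pos hd (sub_pos.2 hslope)
    linear_combination h1 + hab + ρb * hceq
  exact sub_pos.1 (pos_of_mul_pos_right key hb.le)

/-- If `λ₁(ρ_min, v₂) < 0`, then for two points of the invariant domain lying on the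
level line `ρ v = q` of a flux constraint of capacity `q`, the values of the Riemann
invariant `w = v + p(ρ)` are ordered exactly as the densities. -/
theorem riemann_invariant_ordering_on_constraint
    (p : ℝ → ℝ) (hp : ContDiff ℝ 2 p) (hp0 : p 0 = 0)
    (hp' : ∀ ρ : ℝ, 0 < ρ → 0 < deriv p ρ)
    (hp'' : ∀ ρ : ℝ, 0 ≤ ρ → 0 ≤ deriv (deriv p) ρ)
    (v1 v2 w1 w2 : ℝ) (hv1 : 0 < v1) (hv12 : v1 < v2)
    (hw1 : 0 < w1) (hw12 : w1 < w2) (hv2w2 : v2 < w2)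
    (ρmin : ℝ) (hρmin0 : 0 ≤ ρmin) (hpmin : p ρmin = w1 - v2)
    (hlam_min : v2 - ρmin * deriv p ρmin < 0)
    (q : ℝ) (hq : 0 < q)
    (ρa va ρb vb : ℝ)
    (ha : (ρa, va) ∈ invDomain p v1 v2 w1 w2)
    (hb : (ρb, vb) ∈ invDomain p v1 v2 w1 w2)
    (hqa : ρa * va = q) (hqb : ρb * vb = q) :
    va + p ρa ≤ vb + p ρb ↔ ρa ≤ ρb := by
  have hd : Differentiable ℝ p := hp.differentiable (by norm_num)
  have hd2 : Differentiable ℝ (deriv p) :=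
    ((contDiff_succ_iff_deriv (n := 1)).1 (by simpa [one_add_one_eq_two] using hp)).2.2.differentiable
      (by norm_num)
  have hmono : MonotoneOn (deriv p) (Set.Ici 0) :=
    monotoneOn_of_deriv_nonneg (convex_Ici 0) hd2.continuous.continuousOn hd2.differentiableOn
      fun x hx => hp'' x (interior_subset hx)
  -- `ρmin = 0` would turn the hypothesis on `λ₁` into `v2 < 0`.
  have h0 : 0 < ρmin := by
    refine lt_of_le_of_ne hρmin0 fun h => ?_
    rw [← h] at hlam_min
    linarith
  have hma := le_density_of_mem_invDomain hd hp' hpmin h0 ha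
  have hmb := le_density_of_mem_invDomain hd hp' hpmin h0 hb
  obtain ⟨-, hva, -, hva2, -, -⟩ := ha
  obtain ⟨-, hvb, -, hvb2, -, -⟩ := hb
  have hab : ρa * va = ρb * vb := hqa.trans hqb.symm
  rcases lt_trichotomy ρa ρb with hlt | heq | hgt
  · exact iff_of_true (riemann_invariant_lt_of_density_lt hd hmono h0 hlam_min hma hva hva2
      hab hlt).le hlt.le
  · subst heq
    have hv : va = vb := mul_left_cancel₀ (h0.trans_le hma).ne' hab
    simp [hv]
  · exact iff_of_false (riemann_invariant_lt_of_density_lt hd hmono h0 hlam_min hmb hvb hvb2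
      hab.symm hgt).not_ge hgt.not_ge
end

section
/- Assume λ1(ρmin, vmin) < 0 and fix q > 0. Then there exist positive constants c1, c2, c3, depending only on q, p, v1, v2, w1, w2, such that for all points (ρα, vα), (ρβ, vβ), (ργ, vγ) ∈ D satisfying vβ + p(ρβ) > vα + p(ρα), vγ = vα, vβ + p(ρβ) = vγ + p(ργ), and ρα·vα = ρβ·vβ = q, one has ρα < ργ < ρβ and moreover: (i) ρβ − ργ ≤ c1·(ργ − ρα); (ii) ργ − ρα ≤ c2·(ρβ − ργ); (iii) vγ − vβ ≤ c3·(ργ − ρα). In (i) and (ii) one may take c1 = v2/(−λ1(ρmin, vmin)) and c2 = (−λ1(ρmax, vmax))/v1. -/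
lemma deriv_mono_of_nonneg {p : ℝ → ℝ} (hp : ContDiff ℝ 2 p)
    (hp'' : ∀ ρ : ℝ, 0 ≤ ρ → 0 ≤ deriv (deriv p) ρ) {x y : ℝ} (hx : 0 ≤ x) (hxy : x ≤ y) :
    deriv p x ≤ deriv p y := by
  have hd : ContDiff ℝ 1 (deriv p) := hp.deriv'
  have hm : MonotoneOn (deriv p) (Set.Ici 0) := by
    refine monotoneOn_of_deriv_nonneg (convex_Ici 0) hd.continuous.continuousOn
      (hd.differentiable (by norm_num)).differentiableOn ?_
    intro z hz
    rw [interior_Ici] at hz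
    exact hp'' z (le_of_lt hz)
  exact hm hx (hx.trans hxy) hxy

lemma secant_bounds {p : ℝ → ℝ} (hp : ContDiff ℝ 2 p)
    (hp'' : ∀ ρ : ℝ, 0 ≤ ρ → 0 ≤ deriv (deriv p) ρ) {x y : ℝ} (hx : 0 ≤ x) (hxy : x ≤ y) :
    deriv p x * (y - x) ≤ p y - p x ∧ p y - p x ≤ deriv p y * (y - x) := by
  rcases hxy.eq_or_lt with rfl | hlt
  · simp
  obtain ⟨c, hc, hce⟩ := exists_deriv_eq_slope p hlt hp.continuous.continuousOn
    (hp.differentiable (by norm_num)).differentiableOn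
  have hyx : 0 < y - x := sub_pos.mpr hlt
  have hs : p y - p x = deriv p c * (y - x) := by
    rw [hce]; field_simp
  rw [hs]
  exact ⟨mul_le_mul_of_nonneg_right (deriv_mono_of_nonneg hp hp'' hx hc.1.le) hyx.le,
    mul_le_mul_of_nonneg_right
      (deriv_mono_of_nonneg hp hp'' (hx.trans hc.1.le) hc.2.le) hyx.le⟩

/-- Triangle-type interaction estimates: there are positive constants `c₁, c₂, c₃`
depending only on `q` and the invariant domain (with `c₁ = v₂ / (-λ₁(ρ_min, v_min))` and
`c₂ = (-λ₁(ρ_max, v_max)) / v₁`) such that for any states `(ρ^α, v^α)`, `(ρ^β, v^β)`,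
`(ρ^γ, v^γ)` of the invariant domain with `w^β > w^α`, `v^γ = v^α`, `w^β = w^γ` and
`ρ^α v^α = ρ^β v^β = q`, one has `ρ^α < ρ^γ < ρ^β` together with the estimates
`ρ^β - ρ^γ ≤ c₁ (ρ^γ - ρ^α)`, `ρ^γ - ρ^α ≤ c₂ (ρ^β - ρ^γ)` and
`v^γ - v^β ≤ c₃ (ρ^γ - ρ^α)`. -/
theorem triangle_interaction_estimates
    (p : ℝ → ℝ) (hp : ContDiff ℝ 2 p) (hp0 : p 0 = 0)
    (hp' : ∀ ρ : ℝ, 0 < ρ → 0 < deriv p ρ)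
    (hp'' : ∀ ρ : ℝ, 0 ≤ ρ → 0 ≤ deriv (deriv p) ρ)
    (v1 v2 w1 w2 : ℝ) (hv1 : 0 < v1) (hv12 : v1 < v2)
    (hw1 : 0 < w1) (hw12 : w1 < w2) (hv2w2 : v2 < w2)
    (ρmin ρmax : ℝ) (hρmin0 : 0 ≤ ρmin) (hρmax0 : 0 ≤ ρmax)
    (hpmin : p ρmin = w1 - v2) (hpmax : p ρmax = w2 - v1)
    (hlam_min : v2 - ρmin * deriv p ρmin < 0)
    (q : ℝ) (hq : 0 < q) :
    ∃ c1 c2 c3 : ℝ, 0 < c1 ∧ 0 < c2 ∧ 0 < c3 ∧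
      c1 = v2 / (-(v2 - ρmin * deriv p ρmin)) ∧
      c2 = -(v1 - ρmax * deriv p ρmax) / v1 ∧
      ∀ ρa va ρb vb ρg vg : ℝ,
        (ρa, va) ∈ invDomain p v1 v2 w1 w2 →
        (ρb, vb) ∈ invDomain p v1 v2 w1 w2 →
        (ρg, vg) ∈ invDomain p v1 v2 w1 w2 →
        va + p ρa < vb + p ρb → vg = va → vb + p ρb = vg + p ρg →
        ρa * va = q → ρb * vb = q →
        (ρa < ρg ∧ ρg < ρb) ∧
        ρb - ρg ≤ c1 * (ρg - ρa) ∧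
        ρg - ρa ≤ c2 * (ρb - ρg) ∧
        vg - vb ≤ c3 * (ρg - ρa) := by
  have hmono : StrictMonoOn p (Set.Ici 0) := by
    refine strictMonoOn_of_deriv_pos (convex_Ici 0) hp.continuous.continuousOn ?_
    intro z hz
    rw [interior_Ici] at hz
    exact hp' z hz
  -- at `ρmin = 0` the hypothesis on `λ₁` would read `v2 < 0`
  have hρmin : 0 < ρmin := by
    rcases hρmin0.eq_or_lt with h | h
    · rw [← h] at hlam_min
      linarith
    · exact h
  have hmm : ρmin ≤ ρmax := by
    rw [← hmono.le_iff_le hρmin0 hρmax0]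
    linarith
  have hρmax : 0 < ρmax := hρmin.trans_le hmm
  have hdmin := hp' ρmin hρmin
  have hdmax := hp' ρmax hρmax
  have hprod : ∀ x y : ℝ, ρmin ≤ x → ρmin ≤ y → ρmin * deriv p ρmin ≤ x * deriv p y :=
    fun x y hx hy => mul_le_mul hx (deriv_mono_of_nonneg hp hp'' hρmin0 hy) hdmin.le
      (hρmin0.trans hx)
  have hL : 0 < -(v2 - ρmin * deriv p ρmin) := by linarith
  have hM : 0 < -(v1 - ρmax * deriv p ρmax) := by
    have := hprod ρmax ρmax hmm hmm
    linarith
  have hv2 : 0 < v2 := hv1.trans hv12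
  have hc1 : 0 < v2 / (-(v2 - ρmin * deriv p ρmin)) := div_pos hv2 hL
  refine ⟨_, _, deriv p ρmax * (v2 / (-(v2 - ρmin * deriv p ρmin))), hc1, div_pos hM hv1,
    mul_pos hdmax hc1, rfl, rfl, ?_⟩
  intro ρa va ρb vb ρg vg hA hB hG hw hvg hwg hqa hqb
  have hbd : ∀ ρ v : ℝ, (ρ, v) ∈ invDomain p v1 v2 w1 w2 → ρmin ≤ ρ ∧ ρ ≤ ρmax := by
    rintro ρ v ⟨h1, h2, h3, h4, h5, h6⟩
    simp only at h1 h2 h3 h4 h5 h6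
    rw [← hmono.le_iff_le hρmin0 h1, ← hmono.le_iff_le h1 hρmax0]
    constructor <;> linarith
  obtain ⟨hamin, hamax⟩ := hbd _ _ hA
  obtain ⟨hbmin, hbmax⟩ := hbd _ _ hB
  obtain ⟨hgmin, hgmax⟩ := hbd _ _ hG
  obtain ⟨ha0, -, hva1, hva2, -, -⟩ := hA
  obtain ⟨hb0, -, hvb1, hvb2, -, -⟩ := hB
  obtain ⟨hg0, -, -, -, -, -⟩ := hG
  simp only at ha0 hva1 hva2 hb0 hvb1 hvb2 hg0
  subst hvg
  have hapos : 0 < ρa := hρmin.trans_le hamin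
  have hbpos : 0 < ρb := hρmin.trans_le hbmin
  have hag : ρa < ρg := by
    rw [← hmono.lt_iff_lt ha0 hg0]
    linarith
  have hid1 : (vg - vb) * ρb = vg * (ρb - ρa) := by linarith
  have hid2 : (vg - vb) * ρa = vb * (ρb - ρa) := by linarith
  have hab : ρa < ρb := by
    by_contra! hba
    have hs := (secant_bounds hp hp'' hb0 hba).1
    have h1 := hprod ρa ρb hamin hbmin
    have h2 : vb * (ρa - ρb) ≤ (ρa * deriv p ρb) * (ρa - ρb) :=
      mul_le_mul_of_nonneg_right (by linarith) (by linarith)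
    have h3 : (vb - vg) * ρa ≤ (deriv p ρb * (ρa - ρb)) * ρa := by linarith
    have h4 := le_of_mul_le_mul_right h3 hapos
    linarith
  have hvv : vb < vg := by
    have : 0 < (vg - vb) * ρb := by
      rw [hid1]
      exact mul_pos (by linarith) (by linarith)
    linarith [pos_of_mul_pos_left this hb0]
  have hgb : ρg < ρb := by
    rw [← hmono.lt_iff_lt hg0 hb0]
    linarith
  obtain ⟨hs1, hs2⟩ := secant_bounds hp hp'' hg0 hgb.le
  have hpe : p ρb - p ρg = vg - vb := by linarith
  rw [hpe] at hs1 hs2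
  have hgb' : 0 ≤ ρb - ρg := by linarith
  have hag' : 0 ≤ ρg - ρa := by linarith
  have hdb := deriv_mono_of_nonneg hp hp'' hb0 hbmax
  have hi : ρb - ρg ≤ v2 / (-(v2 - ρmin * deriv p ρmin)) * (ρg - ρa) := by
    rw [div_mul_eq_mul_div, le_div_iff₀ hL]
    have h1 := mul_le_mul_of_nonneg_right hs1 hb0
    have h2 : -(v2 - ρmin * deriv p ρmin) * (ρb - ρg) ≤
        (ρb * deriv p ρg - vg) * (ρb - ρg) :=
      mul_le_mul_of_nonneg_right (by linarith [hprod ρb ρg hbmin hgmin]) hgb'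
    have h3 : vg * (ρg - ρa) ≤ v2 * (ρg - ρa) := mul_le_mul_of_nonneg_right hva2 hag'
    linarith
  refine ⟨⟨hag, hgb⟩, hi, ?_, ?_⟩
  · rw [div_mul_eq_mul_div, le_div_iff₀ hv1]
    have h1 := mul_le_mul_of_nonneg_right hs2 ha0
    have h2 : ρa * deriv p ρb ≤ ρmax * deriv p ρmax :=
      mul_le_mul hamax hdb (hp' ρb hbpos).le hρmax0
    have h3 : (ρa * deriv p ρb - vb) * (ρb - ρg) ≤
        -(v1 - ρmax * deriv p ρmax) * (ρb - ρg) :=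
      mul_le_mul_of_nonneg_right (by linarith) hgb'
    have h4 : v1 * (ρg - ρa) ≤ vb * (ρg - ρa) := mul_le_mul_of_nonneg_right hvb1 hag'
    linarith
  · calc vg - vb ≤ deriv p ρb * (ρb - ρg) := hs2
      _ ≤ deriv p ρmax * (ρb - ρg) := mul_le_mul_of_nonneg_right hdb hgb'
      _ ≤ deriv p ρmax * (v2 / (-(v2 - ρmin * deriv p ρmin)) * (ρg - ρa)) :=
        mul_le_mul_of_nonneg_left hi hdmax.le
      _ = _ := by ring
end

section
/- Let ρmin ≥ 0 with p(ρmin) = w1 − v2 satisfy λ1(ρmin, v2) < 0. Then there is no pair of states (ρk, vk) ∈ D and (ρr, vr) ∈ [0, ∞) × ℝ such that ρk < ρr, vk + p(ρk) = vr + p(ρr), and ρk·vk = ρr·vr. (In other words, a stationary classical shock of the first family of the Aw–Rascle–Zhang system cannot connect two states whose left state lies in the invariant domain.) -/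
/-- If `λ₁(ρ_min, v₂) < 0`, then a stationary classical shock of the first family of the
Aw–Rascle–Zhang system cannot connect two states whose left state lies in the invariant
domain: there are no states with `(ρᵏ, vᵏ) ∈ D`, `ρᵏ < ρʳ`, `vᵏ + p(ρᵏ) = vʳ + p(ρʳ)` and
`ρᵏ vᵏ = ρʳ vʳ`. -/
theorem no_stationary_classical_shock
    (p : ℝ → ℝ) (hp : ContDiff ℝ 2 p) (hp0 : p 0 = 0)
    (hp' : ∀ ρ : ℝ, 0 < ρ → 0 < deriv p ρ)
    (hp'' : ∀ ρ : ℝ, 0 ≤ ρ → 0 ≤ deriv (deriv p) ρ)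
    (v1 v2 w1 w2 : ℝ) (hv1 : 0 < v1) (hv12 : v1 < v2)
    (hw1 : 0 < w1) (hw12 : w1 < w2) (hv2w2 : v2 < w2)
    (ρmin : ℝ) (hρmin0 : 0 ≤ ρmin) (hpmin : p ρmin = w1 - v2)
    (hlam_min : v2 - ρmin * deriv p ρmin < 0) :
    ¬ ∃ ρk vk ρr vr : ℝ, (ρk, vk) ∈ invDomain p v1 v2 w1 w2 ∧ 0 ≤ ρr ∧
        ρk < ρr ∧ vk + p ρk = vr + p ρr ∧ ρk * vk = ρr * vr := by
  rintro ⟨ρk, vk, ρr, vr, ⟨hk0, -, -, hvk2, hw, -⟩, -, hlt, hlax, hrh⟩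
  have hd : Differentiable ℝ p := hp.differentiable (by norm_num)
  have hd' : Differentiable ℝ (deriv p) :=
    (hp.iterate_deriv' 1 1).differentiable (by norm_num)
  have hmono' : MonotoneOn (deriv p) (Set.Ici 0) := by
    refine monotoneOn_of_deriv_nonneg (convex_Ici 0) hd'.continuous.continuousOn
      hd'.differentiableOn fun x hx => ?_
    rw [interior_Ici] at hx
    exact hp'' x (le_of_lt hx)
  have hmono : StrictMonoOn p (Set.Ici 0) := by
    refine strictMonoOn_of_deriv_pos (convex_Ici 0) hd.continuous.continuousOn fun x hx => ?_
    rw [interior_Ici] at hx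
    exact hp' x hx
  -- At `ρmin = 0` the hypothesis on `λ₁` would read `v2 < 0`.
  have hmin : 0 < ρmin := by
    rcases hρmin0.eq_or_lt with h | h
    · rw [← h] at hlam_min
      linarith
    · exact h
  simp only at hk0 hvk2 hw
  have hk : ρmin ≤ ρk := (hmono.le_iff_le hρmin0 hk0).1 (by linarith)
  have hdk : deriv p ρmin ≤ deriv p ρk := hmono' hρmin0 hk0 hk
  have hlam : vk < ρk * deriv p ρk := by
    have := mul_le_mul hk hdk (hp' ρmin hmin).le hk0
    linarith
  have htan : deriv p ρk * (ρr - ρk) ≤ p ρr - p ρk := by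
    obtain ⟨c, hc, hceq⟩ := exists_deriv_eq_slope p hlt hd.continuous.continuousOn
      hd.differentiableOn
    have hle : deriv p ρk ≤ deriv p c := hmono' hk0 (hk0.trans hc.1.le) hc.1.le
    rwa [hceq, le_div_iff₀ (sub_pos.2 hlt)] at hle
  have hvr : vr ≤ vk - deriv p ρk * (ρr - ρk) := by linarith
  have h1 : ρk * vk ≤ ρr * (vk - deriv p ρk * (ρr - ρk)) :=
    hrh ▸ mul_le_mul_of_nonneg_left hvr (hk0.trans hlt.le)
  have h2 : 0 ≤ (ρr - ρk) * (vk - ρr * deriv p ρk) := by linarith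
  have h3 : 0 ≤ vk - ρr * deriv p ρk := nonneg_of_mul_nonneg_right h2 (sub_pos.2 hlt)
  have h4 := mul_le_mul_of_nonneg_right hlt.le (hp' ρk (hmin.trans_le hk)).le
  linarith
end
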